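/- (Convergence of the iterative algorithm.) Let b ∈ ℝ^{N+1}. For u ∈ ℝ^{N+1} and interior i define the discrete second difference q_i(u) = [ (u_{i+1}−u_i)/(x_{i+1}−x_i) − (u_i−u_{i−1})/(x_i−x_{i−1}) ] / (x_{i+1}−x_{i−1}) and the policy σ(u)_i = σ̄ if q_i(u) ≥ 0 and σ(u)_i = σ̲ otherwise. Given any initial iterate ũ⁰ ∈ ℝ^{N+1}, define recursively ũ^{k+1} as the unique solution of (I − ΔtA(σ(ũ^k))) ũ^{k+1} = b (with identity boundary rows). Then the sequence (ũ^k) converges as k → ∞ to the unique vector u* ∈ ℝ^{N+1} satisfying u*_0 = b_0, u*_N = b_N, and u*_i − Δt · max_{σ∈{σ̲,σ̄}} [ α_i(σ)u*_{i−1} + β_i(σ)u*_{i+1} − (α_i(σ)+β_i(σ)+r)u*_i ] = b_i for every interior i. -/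

import Mathlib

/-- `α_i(σ) = σ²x_i²/((x_i − x_{i−1})(x_{i+1} − x_{i−1}))`. -/
noncomputable def alphaC (x : ℕ → ℝ) (s : ℝ) (i : ℕ) : ℝ :=
  s ^ 2 * (x i) ^ 2 / ((x i - x (i - 1)) * (x (i + 1) - x (i - 1)))

/-- `β_i(σ) = σ²x_i²/((x_{i+1} − x_i)(x_{i+1} − x_{i−1}))`. -/
noncomputable def betaC (x : ℕ → ℝ) (s : ℝ) (i : ℕ) : ℝ :=
  s ^ 2 * (x i) ^ 2 / ((x (i + 1) - x i) * (x (i + 1) - x (i - 1)))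

/-- The `i`-th component of `A(τ)u`:
`(A(τ)u)_i = α_i(τ)u_{i−1} + β_i(τ)u_{i+1} − (α_i(τ)+β_i(τ)+r)u_i`. -/
noncomputable def Fnode (x : ℕ → ℝ) (s r : ℝ) (i : ℕ) (u : ℕ → ℝ) : ℝ :=
  alphaC x s i * u (i - 1) + betaC x s i * u (i + 1)
    - (alphaC x s i + betaC x s i + r) * u i

/-- The discrete second difference
`q_i(u) = [(u_{i+1}−u_i)/(x_{i+1}−x_i) − (u_i−u_{i−1})/(x_i−x_{i−1})]/(x_{i+1}−x_{i−1})`. -/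
noncomputable def qdiff (x : ℕ → ℝ) (u : ℕ → ℝ) (i : ℕ) : ℝ :=
  ((u (i + 1) - u i) / (x (i + 1) - x i) - (u i - u (i - 1)) / (x i - x (i - 1)))
    / (x (i + 1) - x (i - 1))

/-- The policy `σ(u)_i = σ̄` if `q_i(u) ≥ 0` and `σ(u)_i = σ̲` otherwise. -/
noncomputable def pol (x : ℕ → ℝ) (σlo σhi : ℝ) (u : ℕ → ℝ) (i : ℕ) : ℝ :=
  if 0 ≤ qdiff x u i then σhi else σlo

/-!
Call a policy greedy at `u` if its operator `I - Δt A(σ)` takes the least value at `u`, in every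
component, among all policies. Since `(A(σ)u)_i = σ_i² x_i² q_i(u) - r u_i`, the sign of `q_i(u)`
selects a greedy policy, so the scheme is Howard's policy iteration. The matrices `I - Δt A(σ)` are
inverse monotone (a negative minimum of `w` would make the corresponding entry of `(I - Δt A(σ)) w`
negative), and for inverse monotone operators the iterates increase from `ũ¹` on. Each iterate is
determined by the policy that produced it, and there are finitely many policies, so the sequence is
eventually constant. At a repeated iterate the equation solved is the nonlinear one.
-/

open Filter

section PolicyIteration

/-- Inverse monotone operators, also called operators of monotone type. A square real matrix has
this property if and only if it is nonsingular with entrywise nonnegative inverse. -/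
def IsInverseMonotone {V W : Type*} [LE V] [LE W] (F : V → W) : Prop :=
  ∀ ⦃v w⦄, F v ≤ F w → v ≤ w

lemma IsInverseMonotone.injective {V W : Type*} [PartialOrder V] [Preorder W] {F : V → W}
    (hF : IsInverseMonotone F) : Function.Injective F :=
  fun _ _ h => le_antisymm (hF h.le) (hF h.ge)

/-- `u` is a run of Howard's policy iteration for the equation `min_{q ∈ S} T q v = b`, where `p k`
is the policy chosen at step `k`. -/
structure IsPolicyIteration {P V W : Type*} [LE W] (T : P → V → W) (S : Set P) (b : W)
    (p : ℕ → P) (u : ℕ → V) : Prop where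
  mem : ∀ k, p k ∈ S
  greedy : ∀ k, ∀ q ∈ S, T (p k) (u k) ≤ T q (u k)
  eval : ∀ k, T (p k) (u (k + 1)) = b

section Preorder

variable {P V W : Type*} [Preorder V] [Preorder W] {T : P → V → W} {S : Set P} {b : W}

lemma le_of_mem_image_of_mem_lowerBounds (hT : ∀ q ∈ S, IsInverseMonotone (T q)) {v w : V}
    (hv : b ∈ (T · v) '' S) (hw : b ∈ lowerBounds ((T · w) '' S)) : v ≤ w := by
  obtain ⟨q, hq, rfl⟩ := hv
  exact hT q hq (hw ⟨q, hq, rfl⟩)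

lemma IsPolicyIteration.monotone_succ {p : ℕ → P} {u : ℕ → V} (h : IsPolicyIteration T S b p u)
    (hT : ∀ q ∈ S, IsInverseMonotone (T q)) : Monotone fun k => u (k + 1) := by
  refine monotone_nat_of_le_succ fun k => hT _ (h.mem (k + 1)) ?_
  calc T (p (k + 1)) (u (k + 1))
    _ ≤ T (p k) (u (k + 1)) := h.greedy (k + 1) _ (h.mem k)
    _ = b := h.eval k
    _ = T (p (k + 1)) (u (k + 1 + 1)) := (h.eval (k + 1)).symm

end Preorder

section PartialOrder

variable {P V W : Type*} [PartialOrder V] [Preorder W] {T : P → V → W} {S : Set P} {b : W}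

lemma eq_of_isLeast_image (hT : ∀ q ∈ S, IsInverseMonotone (T q)) {v w : V}
    (hv : IsLeast ((T · v) '' S) b) (hw : IsLeast ((T · w) '' S) b) : v = w :=
  le_antisymm (le_of_mem_image_of_mem_lowerBounds hT hv.1 hw.2)
    (le_of_mem_image_of_mem_lowerBounds hT hw.1 hv.2)

namespace IsPolicyIteration

variable {p : ℕ → P} {u : ℕ → V}

lemma finite_range_succ (h : IsPolicyIteration T S b p u)
    (hT : ∀ q ∈ S, IsInverseMonotone (T q)) (hS : S.Finite) :
    (Set.range fun k => u (k + 1)).Finite := by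
  have hfiber : ∀ q ∈ S, {v | T q v = b}.Subsingleton := fun q hq _ hv _ hw =>
    (hT q hq).injective (hv.trans hw.symm)
  refine (hS.biUnion fun q hq => (hfiber q hq).finite).subset ?_
  rintro _ ⟨k, rfl⟩
  exact Set.mem_biUnion (h.mem k) (h.eval k)

theorem exists_isLeast_forall_ge_eq (h : IsPolicyIteration T S b p u)
    (hT : ∀ q ∈ S, IsInverseMonotone (T q)) (hS : S.Finite) :
    ∃ K, IsLeast ((T · (u K)) '' S) b ∧ ∀ k ≥ K, u k = u K := by
  obtain ⟨_, ⟨⟨K, rfl⟩, hmax⟩⟩ :=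
    (h.finite_range_succ hT hS).exists_maximal (Set.range_nonempty _)
  have hconst : ∀ k ≥ K, u (k + 1) = u (K + 1) := fun k hk =>
    have hle : u (K + 1) ≤ u (k + 1) := h.monotone_succ hT hk
    le_antisymm (hmax ⟨k, rfl⟩ hle) hle
  refine ⟨K + 1, ⟨⟨p (K + 1), h.mem _, ?_⟩, ?_⟩, fun k hk => ?_⟩
  · simpa only [hconst (K + 1) K.le_succ] using h.eval (K + 1)
  · rintro _ ⟨q, hq, rfl⟩
    rw [← h.eval (K + 1), hconst (K + 1) K.le_succ]
    exact h.greedy (K + 1) q hq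
  · obtain ⟨k, rfl⟩ := Nat.exists_eq_add_of_le' (Nat.one_le_of_lt hk)
    exact hconst k (Nat.le_of_succ_le_succ hk)

end IsPolicyIteration

end PartialOrder

end PolicyIteration

section DominantMatrix

variable {ι R : Type*} [Fintype ι] [Ring R] [LinearOrder R] [IsStrictOrderedRing R]
  {M : Matrix ι ι R}

lemma nonneg_of_nonneg_mulVec (hoff : ∀ i j, i ≠ j → M i j ≤ 0) (hrow : ∀ i, 0 < ∑ j, M i j)
    {w : ι → R} (hw : 0 ≤ M.mulVec w) : 0 ≤ w := by
  intro i
  obtain ⟨m, -, hmin⟩ := Finset.exists_min_image Finset.univ w ⟨i, Finset.mem_univ i⟩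
  suffices hm : 0 ≤ w m from hm.trans (hmin i (Finset.mem_univ i))
  by_contra! hneg
  have hsplit : M.mulVec w m = ∑ j, M m j * (w j - w m) + (∑ j, M m j) * w m := by
    simp only [Matrix.mulVec, dotProduct, mul_sub, Finset.sum_sub_distrib, Finset.sum_mul,
      sub_add_cancel]
  have hsum : ∑ j, M m j * (w j - w m) ≤ 0 := by
    refine Finset.sum_nonpos fun j _ => ?_
    rcases eq_or_ne m j with rfl | hj
    · rw [sub_self, mul_zero]
    · exact mul_nonpos_of_nonpos_of_nonneg (hoff m j hj)
        (sub_nonneg.2 (hmin j (Finset.mem_univ j)))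
  refine (hw m).not_gt ?_
  rw [hsplit]
  exact add_neg_of_nonpos_of_neg hsum (mul_neg_of_pos_of_neg (hrow m) hneg)

lemma isInverseMonotone_mulVec (hoff : ∀ i j, i ≠ j → M i j ≤ 0) (hrow : ∀ i, 0 < ∑ j, M i j) :
    IsInverseMonotone M.mulVec := by
  intro u v h
  rw [← sub_nonneg, ← Matrix.mulVec_sub] at h
  exact sub_nonneg.1 (nonneg_of_nonneg_mulVec hoff hrow h)

end DominantMatrix

section Coefficients

variable {x : ℕ → ℝ} {i : ℕ}

lemma alphaC_nonneg (hl : x (i - 1) ≤ x i) (hr : x i ≤ x (i + 1)) (s : ℝ) : 0 ≤ alphaC x s i :=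
  div_nonneg (by positivity) (mul_nonneg (sub_nonneg.2 hl) (sub_nonneg.2 (hl.trans hr)))

lemma betaC_nonneg (hl : x (i - 1) ≤ x i) (hr : x i ≤ x (i + 1)) (s : ℝ) : 0 ≤ betaC x s i :=
  div_nonneg (by positivity) (mul_nonneg (sub_nonneg.2 hr) (sub_nonneg.2 (hl.trans hr)))

lemma Fnode_const (x : ℕ → ℝ) (s r : ℝ) (i : ℕ) (c : ℝ) :
    Fnode x s r i (fun _ => c) = -(r * c) := by
  simp only [Fnode]
  ring

lemma Fnode_eq_qdiff (hl : x (i - 1) < x i) (hr : x i < x (i + 1)) (s r : ℝ) (u : ℕ → ℝ) :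
    Fnode x s r i u = s ^ 2 * x i ^ 2 * qdiff x u i - r * u i := by
  have h₁ : x i - x (i - 1) ≠ 0 := (sub_pos.2 hl).ne'
  have h₂ : x (i + 1) - x i ≠ 0 := (sub_pos.2 hr).ne'
  have h₃ : x (i + 1) - x (i - 1) ≠ 0 := (sub_pos.2 (hl.trans hr)).ne'
  simp only [Fnode, alphaC, betaC, qdiff]
  field_simp
  ring

lemma pol_mem (x : ℕ → ℝ) (σlo σhi : ℝ) (u : ℕ → ℝ) (i : ℕ) :
    pol x σlo σhi u i ∈ ({σlo, σhi} : Set ℝ) := by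
  unfold pol
  split_ifs <;> simp

lemma Fnode_pol_eq_max (hl : x (i - 1) < x i) (hr : x i < x (i + 1)) {σlo σhi : ℝ}
    (hσ : |σlo| ≤ |σhi|) (r : ℝ) (u : ℕ → ℝ) :
    Fnode x (pol x σlo σhi u i) r i u = max (Fnode x σlo r i u) (Fnode x σhi r i u) := by
  have hsq : σlo ^ 2 * x i ^ 2 ≤ σhi ^ 2 * x i ^ 2 :=
    mul_le_mul_of_nonneg_right (sq_le_sq.2 hσ) (sq_nonneg _)
  unfold pol
  split_ifs with hq <;> simp only [Fnode_eq_qdiff hl hr]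
  · exact (max_eq_right (sub_le_sub_right (mul_le_mul_of_nonneg_right hsq hq) _)).symm
  · exact (max_eq_left (sub_le_sub_right
      (mul_le_mul_of_nonpos_right hsq (not_le.1 hq).le) _)).symm

end Coefficients

/-- The matrix `A(s)` of the discretisation, with zero rows at the two boundary nodes. -/
noncomputable def generatorMatrix (N : ℕ) (x : ℕ → ℝ) (r : ℝ) (s : Fin (N + 1) → ℝ) :
    Matrix (Fin (N + 1)) (Fin (N + 1)) ℝ := fun i j =>
  if 1 ≤ (i : ℕ) ∧ (i : ℕ) ≤ N - 1 then
    if (j : ℕ) = i - 1 then alphaC x (s i) i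
    else if (j : ℕ) = i + 1 then betaC x (s i) i
    else if j = i then -(alphaC x (s i) i + betaC x (s i) i + r)
    else 0
  else 0

/-- The matrix `I - Δt A(s)` of one implicit time step under the policy `s`. -/
noncomputable def implicitMatrix (N : ℕ) (x : ℕ → ℝ) (r Δt : ℝ) (s : Fin (N + 1) → ℝ) :
    Matrix (Fin (N + 1)) (Fin (N + 1)) ℝ :=
  1 - Δt • generatorMatrix N x r s

/-- The values of `u` at the grid nodes `0, …, N`. Sequences on `ℕ` represent vectors of `ℝ^{N+1}`,
and their entries beyond `N` carry no meaning. -/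
def nodeValues (N : ℕ) (u : ℕ → ℝ) : Fin (N + 1) → ℝ := fun i => u i

/-- The set `{σ̲, σ̄}^{N+1}` of policies; the two boundary entries are immaterial because the
boundary rows of `A(s)` vanish. -/
def policies (N : ℕ) (σlo σhi : ℝ) : Set (Fin (N + 1) → ℝ) :=
  {s | ∀ i, s i ∈ ({σlo, σhi} : Set ℝ)}

/-- The nonlinear discrete system `v_i - Δt max_σ (A(σ)v)_i = b_i` with identity boundary rows. -/
def IsBellmanSolution (N : ℕ) (x : ℕ → ℝ) (σlo σhi r Δt : ℝ) (b v : ℕ → ℝ) : Prop :=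
  v 0 = b 0 ∧ v N = b N ∧
    ∀ i, 1 ≤ i → i ≤ N - 1 →
      v i - Δt * max (Fnode x σlo r i v) (Fnode x σhi r i v) = b i

lemma policies_finite (N : ℕ) (σlo σhi : ℝ) : (policies N σlo σhi).Finite :=
  Set.Finite.pi' fun _ => Set.toFinite _

lemma nodeValues_pol_mem_policies (N : ℕ) (x : ℕ → ℝ) (σlo σhi : ℝ) (u : ℕ → ℝ) :
    nodeValues N (pol x σlo σhi u) ∈ policies N σlo σhi :=
  fun i => pol_mem x σlo σhi u i

lemma generatorMatrix_mulVec (N : ℕ) (x : ℕ → ℝ) (r : ℝ) (s : Fin (N + 1) → ℝ) (u : ℕ → ℝ)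
    (i : Fin (N + 1)) :
    (generatorMatrix N x r s).mulVec (nodeValues N u) i =
      if 1 ≤ (i : ℕ) ∧ (i : ℕ) ≤ N - 1 then Fnode x (s i) r i u else 0 := by
  simp only [Matrix.mulVec, dotProduct, generatorMatrix, nodeValues]
  split_ifs with hi
  · have hentry : ∀ j : Fin (N + 1),
        (if (j : ℕ) = i - 1 then alphaC x (s i) i
          else if (j : ℕ) = i + 1 then betaC x (s i) i
          else if j = i then -(alphaC x (s i) i + betaC x (s i) i + r) else 0) * u j =
        (if j = ⟨i - 1, by omega⟩ then alphaC x (s i) i * u j else 0) +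
          (if j = ⟨i + 1, by omega⟩ then betaC x (s i) i * u j else 0) -
          (if j = i then (alphaC x (s i) i + betaC x (s i) i + r) * u j else 0) := by
      intro j
      simp only [Fin.ext_iff]
      split_ifs <;> first | omega | ring
    simp only [hentry, Finset.sum_sub_distrib, Finset.sum_add_distrib, Finset.sum_ite_eq',
      Finset.mem_univ, if_true, Fnode]
  · simp only [zero_mul, Finset.sum_const_zero]

lemma implicitMatrix_mulVec (N : ℕ) (x : ℕ → ℝ) (r Δt : ℝ) (s : Fin (N + 1) → ℝ) (u : ℕ → ℝ)
    (i : Fin (N + 1)) :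
    (implicitMatrix N x r Δt s).mulVec (nodeValues N u) i =
      if 1 ≤ (i : ℕ) ∧ (i : ℕ) ≤ N - 1 then u i - Δt * Fnode x (s i) r i u else u i := by
  simp only [implicitMatrix, Matrix.sub_mulVec, Matrix.one_mulVec, Matrix.smul_mulVec, Pi.sub_apply,
    Pi.smul_apply, smul_eq_mul, generatorMatrix_mulVec, nodeValues]
  split_ifs
  · rfl
  · rw [mul_zero, sub_zero]

lemma implicitMatrix_mulVec_eq_iff (N : ℕ) (x : ℕ → ℝ) (r Δt : ℝ) (s u b : ℕ → ℝ) :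
    (implicitMatrix N x r Δt (nodeValues N s)).mulVec (nodeValues N u) = nodeValues N b ↔
      u 0 = b 0 ∧ u N = b N ∧
        ∀ i, 1 ≤ i → i ≤ N - 1 → u i - Δt * Fnode x (s i) r i u = b i := by
  simp only [funext_iff, implicitMatrix_mulVec, nodeValues]
  constructor
  · intro h
    refine ⟨?_, ?_, fun i h1 h2 => ?_⟩
    · simpa using h 0
    · have hlast := h (Fin.last N)
      rwa [Fin.val_last, if_neg (by omega)] at hlast
    · simpa only [if_pos (And.intro h1 h2)] using h ⟨i, by omega⟩
  · rintro ⟨h0, hN, h⟩ i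
    split_ifs with hi
    · exact h i hi.1 hi.2
    · obtain hi | hi : (i : ℕ) = 0 ∨ (i : ℕ) = N := by omega
      · rw [hi, h0]
      · rw [hi, hN]

section Grid

variable {N : ℕ} {x : ℕ → ℝ} {r Δt : ℝ}

lemma pred_lt_of_forall_lt_succ (hx : ∀ i < N, x i < x (i + 1)) {i : ℕ} (h1 : 1 ≤ i) (h2 : i ≤ N) :
    x (i - 1) < x i := by
  simpa only [Nat.sub_add_cancel h1] using hx (i - 1) (by omega)

lemma generatorMatrix_nonneg_of_ne (hx : ∀ i < N, x i < x (i + 1)) (s : Fin (N + 1) → ℝ)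
    {i j : Fin (N + 1)} (hij : i ≠ j) : 0 ≤ generatorMatrix N x r s i j := by
  unfold generatorMatrix
  split_ifs with hi hl hr hj
  · exact alphaC_nonneg (pred_lt_of_forall_lt_succ hx hi.1 (by omega)).le (hx i (by omega)).le _
  · exact betaC_nonneg (pred_lt_of_forall_lt_succ hx hi.1 (by omega)).le (hx i (by omega)).le _
  · exact absurd hj.symm hij
  · exact le_rfl
  · exact le_rfl

lemma implicitMatrix_nonpos_of_ne (hx : ∀ i < N, x i < x (i + 1)) (hΔt : 0 ≤ Δt)
    (s : Fin (N + 1) → ℝ) {i j : Fin (N + 1)} (hij : i ≠ j) :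
    implicitMatrix N x r Δt s i j ≤ 0 := by
  simp only [implicitMatrix, Matrix.sub_apply, Matrix.one_apply_ne hij, Matrix.smul_apply,
    smul_eq_mul, zero_sub, neg_nonpos]
  exact mul_nonneg hΔt (generatorMatrix_nonneg_of_ne hx s hij)

lemma sum_implicitMatrix_pos (x : ℕ → ℝ) (hr : 0 < 1 + Δt * r) (s : Fin (N + 1) → ℝ)
    (i : Fin (N + 1)) : 0 < ∑ j, implicitMatrix N x r Δt s i j := by
  have hrow : ∑ j, implicitMatrix N x r Δt s i j =
      (implicitMatrix N x r Δt s).mulVec (nodeValues N fun _ => 1) i := by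
    simp only [Matrix.mulVec, dotProduct, nodeValues, mul_one]
  rw [hrow, implicitMatrix_mulVec, Fnode_const]
  split_ifs
  · linarith
  · exact one_pos

lemma isInverseMonotone_implicitMatrix (hx : ∀ i < N, x i < x (i + 1)) (hΔt : 0 ≤ Δt)
    (hr : 0 < 1 + Δt * r) (s : Fin (N + 1) → ℝ) :
    IsInverseMonotone (implicitMatrix N x r Δt s).mulVec :=
  isInverseMonotone_mulVec (fun _ _ => implicitMatrix_nonpos_of_ne hx hΔt s)
    (sum_implicitMatrix_pos x hr s)

variable {σlo σhi : ℝ}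

lemma implicitMatrix_pol_mulVec_le (hx : ∀ i < N, x i < x (i + 1)) (hσ : |σlo| ≤ |σhi|)
    (hΔt : 0 ≤ Δt) (u : ℕ → ℝ) {s : Fin (N + 1) → ℝ} (hs : s ∈ policies N σlo σhi) :
    (implicitMatrix N x r Δt (nodeValues N (pol x σlo σhi u))).mulVec (nodeValues N u) ≤
      (implicitMatrix N x r Δt s).mulVec (nodeValues N u) := by
  intro i
  simp only [implicitMatrix_mulVec]
  split_ifs with hi
  · have hmax : Fnode x (s i) r i u ≤ max (Fnode x σlo r i u) (Fnode x σhi r i u) := by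
      rcases hs i with h | h <;> rw [h]
      exacts [le_max_left _ _, le_max_right _ _]
    rw [← Fnode_pol_eq_max (pred_lt_of_forall_lt_succ hx hi.1 (by omega)) (hx i (by omega)) hσ]
      at hmax
    exact sub_le_sub_left (mul_le_mul_of_nonneg_left hmax hΔt) _
  · exact le_rfl

lemma isBellmanSolution_iff_mulVec_pol (hx : ∀ i < N, x i < x (i + 1)) (hσ : |σlo| ≤ |σhi|)
    (b v : ℕ → ℝ) :
    IsBellmanSolution N x σlo σhi r Δt b v ↔
      (implicitMatrix N x r Δt (nodeValues N (pol x σlo σhi v))).mulVec (nodeValues N v) =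
        nodeValues N b := by
  rw [implicitMatrix_mulVec_eq_iff, IsBellmanSolution]
  refine and_congr_right' (and_congr_right' (forall_congr' fun i => forall₂_congr fun h1 h2 => ?_))
  rw [Fnode_pol_eq_max (pred_lt_of_forall_lt_succ hx h1 (by omega)) (hx i (by omega)) hσ]

lemma isBellmanSolution_iff_isLeast (hx : ∀ i < N, x i < x (i + 1)) (hσ : |σlo| ≤ |σhi|)
    (hΔt : 0 ≤ Δt) (b v : ℕ → ℝ) :
    IsBellmanSolution N x σlo σhi r Δt b v ↔
      IsLeast ((fun s => (implicitMatrix N x r Δt s).mulVec (nodeValues N v)) ''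
        policies N σlo σhi) (nodeValues N b) := by
  have hpol : IsLeast ((fun s => (implicitMatrix N x r Δt s).mulVec (nodeValues N v)) ''
      policies N σlo σhi)
      ((implicitMatrix N x r Δt (nodeValues N (pol x σlo σhi v))).mulVec (nodeValues N v)) := by
    refine ⟨⟨_, nodeValues_pol_mem_policies N x σlo σhi v, rfl⟩, ?_⟩
    rintro _ ⟨s, hs, rfl⟩
    exact implicitMatrix_pol_mulVec_le hx hσ hΔt v hs
  rw [isBellmanSolution_iff_mulVec_pol hx hσ]
  exact ⟨fun h => h ▸ hpol, hpol.unique⟩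

lemma isPolicyIteration_nodeValues (hx : ∀ i < N, x i < x (i + 1)) (hσ : |σlo| ≤ |σhi|)
    (hΔt : 0 ≤ Δt) {b : ℕ → ℝ} {ut : ℕ → ℕ → ℝ}
    (hrec0 : ∀ k, ut (k + 1) 0 = b 0) (hrecN : ∀ k, ut (k + 1) N = b N)
    (hrec : ∀ k, ∀ i, 1 ≤ i → i ≤ N - 1 →
      ut (k + 1) i - Δt * Fnode x (pol x σlo σhi (ut k) i) r i (ut (k + 1)) = b i) :
    IsPolicyIteration (fun s => (implicitMatrix N x r Δt s).mulVec) (policies N σlo σhi)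
      (nodeValues N b) (fun k => nodeValues N (pol x σlo σhi (ut k)))
      (fun k => nodeValues N (ut k)) where
  mem k := nodeValues_pol_mem_policies N x σlo σhi (ut k)
  greedy k _ hs := implicitMatrix_pol_mulVec_le hx hσ hΔt (ut k) hs
  eval k := (implicitMatrix_mulVec_eq_iff N x r Δt _ _ b).2 ⟨hrec0 k, hrecN k, hrec k⟩

lemma IsBellmanSolution.eqOn_Iic (hx : ∀ i < N, x i < x (i + 1)) (hσ : |σlo| ≤ |σhi|)
    (hΔt : 0 ≤ Δt) (hr : 0 < 1 + Δt * r) {b v w : ℕ → ℝ}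
    (hv : IsBellmanSolution N x σlo σhi r Δt b v) (hw : IsBellmanSolution N x σlo σhi r Δt b w) :
    Set.EqOn v w (Set.Iic N) := by
  rw [isBellmanSolution_iff_isLeast hx hσ hΔt] at hv hw
  have hvw : nodeValues N v = nodeValues N w :=
    eq_of_isLeast_image (fun s _ => isInverseMonotone_implicitMatrix hx hΔt hr s) hv hw
  exact fun i hi => congr_fun hvw ⟨i, Nat.lt_succ_of_le hi⟩

end Grid

theorem convergence_iterative_algorithm_general {N : ℕ} {x : ℕ → ℝ}
    (hx : ∀ i < N, x i < x (i + 1)) {σlo σhi r Δt : ℝ} (hσ : |σlo| ≤ |σhi|) (hΔt : 0 ≤ Δt)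
    (hr : 0 < 1 + Δt * r) {b : ℕ → ℝ} {ut : ℕ → ℕ → ℝ}
    (hrec0 : ∀ k, ut (k + 1) 0 = b 0) (hrecN : ∀ k, ut (k + 1) N = b N)
    (hrec : ∀ k, ∀ i, 1 ≤ i → i ≤ N - 1 →
      ut (k + 1) i - Δt * Fnode x (pol x σlo σhi (ut k) i) r i (ut (k + 1)) = b i) :
    ∃ ustar : ℕ → ℝ, IsBellmanSolution N x σlo σhi r Δt b ustar ∧
      (∀ v, IsBellmanSolution N x σlo σhi r Δt b v → ∀ i ≤ N, v i = ustar i) ∧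
      ∀ i ≤ N, ∀ᶠ k in atTop, ut k i = ustar i := by
  obtain ⟨K, hK, hconst⟩ :=
    (isPolicyIteration_nodeValues hx hσ hΔt hrec0 hrecN hrec).exists_isLeast_forall_ge_eq
      (fun s _ => isInverseMonotone_implicitMatrix hx hΔt hr s) (policies_finite N σlo σhi)
  have hsol : IsBellmanSolution N x σlo σhi r Δt b (ut K) :=
    (isBellmanSolution_iff_isLeast hx hσ hΔt b (ut K)).2 hK
  refine ⟨ut K, hsol, fun v hv i hi => hv.eqOn_Iic hx hσ hΔt hr hsol hi, fun i hi => ?_⟩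
  filter_upwards [eventually_ge_atTop K] with k hk
  exact congr_fun (hconst k hk) ⟨i, Nat.lt_succ_of_le hi⟩

/-- Convergence of the iterative algorithm: the policy iteration
`(I − ΔtA(σ(ũ^k)))ũ^{k+1} = b` converges, from any initial iterate, to the unique
solution of the nonlinear discrete system
`u*_i − Δt·max_{σ∈{σ̲,σ̄}} (A(σ)u*)_i = b_i` with identity boundary rows. -/
theorem convergence_iterative_algorithm
    (N : ℕ) (hN : 2 ≤ N) (x : ℕ → ℝ) (hx0 : x 0 = 0)
    (hxmono : ∀ i < N, x i < x (i + 1))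
    (σlo σhi r Δt : ℝ) (hσlo : 0 ≤ σlo) (hσ : σlo < σhi) (hr : 0 ≤ r) (hΔt : 0 < Δt)
    (b : ℕ → ℝ) (ut : ℕ → ℕ → ℝ)
    (hrec0 : ∀ k, ut (k + 1) 0 = b 0) (hrecN : ∀ k, ut (k + 1) N = b N)
    (hrec : ∀ k, ∀ i, 1 ≤ i → i ≤ N - 1 →
      ut (k + 1) i - Δt * Fnode x (pol x σlo σhi (ut k) i) r i (ut (k + 1)) = b i) :
    ∃ ustar : ℕ → ℝ,
      (ustar 0 = b 0 ∧ ustar N = b N ∧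
        ∀ i, 1 ≤ i → i ≤ N - 1 →
          ustar i - Δt * max (Fnode x σlo r i ustar) (Fnode x σhi r i ustar) = b i) ∧
      (∀ v : ℕ → ℝ,
        (v 0 = b 0 ∧ v N = b N ∧
          ∀ i, 1 ≤ i → i ≤ N - 1 →
            v i - Δt * max (Fnode x σlo r i v) (Fnode x σhi r i v) = b i) →
        ∀ i ≤ N, v i = ustar i) ∧
      ∀ i ≤ N, Filter.Tendsto (fun k => ut k i) Filter.atTop (nhds (ustar i)) := by
  obtain ⟨u, hu, huniq, hev⟩ := convergence_iterative_algorithm_general hxmono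
    (abs_le_abs_of_nonneg hσlo hσ.le) hΔt.le (by positivity) hrec0 hrecN hrec
  exact ⟨u, hu, huniq, fun i hi => EventuallyEq.tendsto (hev i hi)⟩
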